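/- arXiv:2205.00109 — 6 statements merged into one kernel-verified Lean document; each statement's English description precedes it below -/
import Mathlib

section
/- Suppose t ≥ 1, k > t, n ≥ 3(t+2)³k², and F ⊆ binom([n],k) is a t-intersecting family. Then |I(F)| ≤ |I(A(n,k,t))|. -/
open Finset

def ground (n : ℕ) : Finset ℕ := Finset.Icc 1 n

def ksets (n k : ℕ) : Finset (Finset ℕ) := (ground n).powersetCard k

def starF (n k : ℕ) (T : Finset ℕ) : Finset (Finset ℕ) :=
  (ksets n k).filter fun S => T ⊆ S

def meet (A B : Finset (Finset ℕ)) : Finset (Finset ℕ) :=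
  (A ×ˢ B).image fun p => p.1 ∩ p.2

def dInt (A B : Finset (Finset ℕ)) : Finset (Finset ℕ) :=
  ((A ×ˢ B).filter fun p => p.1 ≠ p.2).image fun p => p.1 ∩ p.2

def crossInt (A B : Finset (Finset ℕ)) : Prop :=
  ∀ F ∈ A, ∀ G ∈ B, (F ∩ G).Nonempty

open Classical in
noncomputable def nu (A : Finset (Finset ℕ)) : ℕ :=
  (A.powerset.filter fun M : Finset (Finset ℕ) =>
    (↑M : Set (Finset ℕ)).PairwiseDisjoint id).sup Finset.card

def transv (n k : ℕ) (H : Finset (Finset ℕ)) : Finset (Finset ℕ) :=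
  (ground n).powerset.filter fun T => T.card ≤ k ∧ ∀ h ∈ H, (T ∩ h).Nonempty

def basis (n k : ℕ) (H : Finset (Finset ℕ)) : Finset (Finset ℕ) :=
  (transv n k H).filter fun b => ∀ b' ∈ transv n k H, b' ⊆ b → b' = b

def tIntersecting (t : ℕ) (A : Finset (Finset ℕ)) : Prop :=
  ∀ F ∈ A, ∀ F' ∈ A, t ≤ (F ∩ F').card

def ttransv (n k t : ℕ) (H : Finset (Finset ℕ)) : Finset (Finset ℕ) :=
  (ground n).powerset.filter fun T => T.card ≤ k ∧ ∀ h ∈ H, t ≤ (T ∩ h).card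

def tbasis (n k t : ℕ) (H : Finset (Finset ℕ)) : Finset (Finset ℕ) :=
  (ttransv n k t H).filter fun b => ∀ b' ∈ ttransv n k t H, b' ⊆ b → b' = b

def crossSperner (A B : Finset (Finset ℕ)) : Prop :=
  ∀ a ∈ A, ∀ b ∈ B, ¬ a ⊆ b ∧ ¬ b ⊆ a

def A1 (n k : ℕ) : Finset (Finset ℕ) :=
  starF n k {1, 2} ∪ starF n k {3, 4} ∪ starF n k {1, 4, 5} ∪ starF n k {2, 3, 6}

def A2 (n k : ℕ) : Finset (Finset ℕ) :=
  starF n k {1, 3} ∪ starF n k {2, 4} ∪ starF n k {1, 4, 6} ∪ starF n k {2, 3, 5}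

def Ankt (n k t : ℕ) : Finset (Finset ℕ) :=
  (ksets n k).filter fun A => t + 1 ≤ (A ∩ ground (t + 2)).card

/-- The number of subsets with fewer than `i` elements of an `m`-element set. -/
def smallCount (m i : ℕ) : ℕ := ∑ j ∈ range i, m.choose j

lemma card_filter_card_lt (U : Finset ℕ) (i : ℕ) :
    (U.powerset.filter fun X => X.card < i).card = smallCount U.card i := by
  rw [smallCount, card_eq_sum_card_fiberwise (f := Finset.card) (t := range i)
    (fun X hX => by simpa using (mem_filter.1 hX).2)]
  refine sum_congr rfl fun j hj => ?_
  rw [← card_powersetCard]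
  congr 1
  ext X
  simp only [mem_filter, mem_powerset, mem_powersetCard]
  have := mem_range.1 hj
  constructor
  · rintro ⟨⟨h, _⟩, h'⟩
    exact ⟨h, h'⟩
  · rintro ⟨h, rfl⟩
    exact ⟨⟨h, this⟩, rfl⟩

lemma smallCount_mono_left {m m' : ℕ} (h : m ≤ m') (i : ℕ) : smallCount m i ≤ smallCount m' i :=
  sum_le_sum fun j _ => Nat.choose_le_choose j h

lemma mul_smallCount_le {m q c : ℕ} (h : q * c + c ≤ m) {j : ℕ} (hj : j ≤ c) :
    q * smallCount m j ≤ smallCount m (j + 1) := by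
  have hterm : ∀ i ∈ range j, q * m.choose i ≤ m.choose (i + 1) := by
    intro i hi
    have hi' := mem_range.1 hi
    have hrec := Nat.choose_succ_right_eq m i
    have hq : q * (i + 1) ≤ m - i := by
      have : q * (i + 1) ≤ q * c := Nat.mul_le_mul_left q (by omega)
      omega
    refine Nat.le_of_mul_le_mul_right (c := i + 1) ?_ (Nat.succ_pos i)
    rw [hrec]
    calc q * m.choose i * (i + 1) = m.choose i * (q * (i + 1)) := by ring
      _ ≤ m.choose i * (m - i) := Nat.mul_le_mul_left _ hq
  rw [smallCount, smallCount, sum_range_succ', mul_sum]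
  exact (sum_le_sum hterm).trans (Nat.le_add_right _ _)

lemma pow_mul_smallCount_le {m q c : ℕ} (h : q * c + c ≤ m) (i : ℕ) (hi : i < c) :
    q ^ (i + 1) * smallCount m (c - i) ≤ smallCount m (c + 1) := by
  induction i with
  | zero => simpa using mul_smallCount_le h le_rfl
  | succ i ih =>
    have h1 := mul_smallCount_le h (j := c - (i + 1)) (by omega)
    rw [show c - (i + 1) + 1 = c - i by omega] at h1
    calc q ^ (i + 1 + 1) * smallCount m (c - (i + 1))
        = q ^ (i + 1) * (q * smallCount m (c - (i + 1))) := by ring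
      _ ≤ q ^ (i + 1) * smallCount m (c - i) := Nat.mul_le_mul_left _ h1
      _ ≤ _ := ih (by omega)

lemma card_ground (n : ℕ) : (ground n).card = n := by simp [ground]

/-- Sets with a prescribed trace on `Y` and fewer than `i` elements outside `Y`. -/
lemma card_le_smallCount_of_trace {n i : ℕ} {Y y : Finset ℕ} (hY : Y ⊆ ground n)
    {H : Finset (Finset ℕ)}
    (hH : ∀ I ∈ H, I ⊆ ground n ∧ I ∩ Y = y ∧ (I \ Y).card < i) :
    H.card ≤ smallCount (n - Y.card) i := by
  have hc : (ground n \ Y).card = n - Y.card := by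
    rw [card_sdiff_of_subset hY, card_ground]
  rw [← hc, ← card_filter_card_lt]
  refine card_le_card_of_injOn (fun I => I \ Y) (fun I hI => ?_) fun I hI I' hI' hII' => ?_
  · obtain ⟨h1, -, h3⟩ := hH I hI
    simp only [coe_filter, Set.mem_ofPred_eq, mem_powerset]
    exact ⟨sdiff_subset_sdiff h1 le_rfl, h3⟩
  · dsimp only at hII'
    rw [← sdiff_union_inter I Y, ← sdiff_union_inter I' Y, hII', (hH I hI).2.1, (hH I' hI').2.1]

lemma card_eq_sum_traces {t : ℕ} {Y : Finset ℕ} (hY : Y.card = t + 2) {H : Finset (Finset ℕ)}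
    (hH : ∀ I ∈ H, t ≤ (I ∩ Y).card) :
    H.card = ∑ y ∈ powersetCard t Y, (H.filter fun I => I ∩ Y = y).card
      + ∑ y ∈ powersetCard (t + 1) Y, (H.filter fun I => I ∩ Y = y).card
      + ∑ y ∈ powersetCard (t + 2) Y, (H.filter fun I => I ∩ Y = y).card := by
  rw [card_eq_sum_card_fiberwise (f := fun I => I ∩ Y) (t := Y.powerset)
    (fun I _ => by simp), sum_powerset, hY, sum_range_succ, sum_range_succ, sum_range_succ]
  have : ∑ j ∈ range t, ∑ y ∈ powersetCard j Y, (H.filter fun I => I ∩ Y = y).card = 0 := by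
    refine sum_eq_zero fun j hj => sum_eq_zero fun y hy => ?_
    rw [card_eq_zero, filter_eq_empty_iff]
    rintro I hI rfl
    have h1 := hH I hI
    have h2 := (mem_powersetCard.1 hy).2
    have h3 := mem_range.1 hj
    omega
  rw [this, zero_add]

/-- Sets of size less than `k` meeting `Y` in at least `t` elements. -/
def traceFamily (n k t : ℕ) (Y : Finset ℕ) : Finset (Finset ℕ) :=
  (ground n).powerset.filter fun I => t ≤ (I ∩ Y).card ∧ I.card < k

lemma mem_traceFamily {n k t : ℕ} {Y I : Finset ℕ} :
    I ∈ traceFamily n k t Y ↔ I ⊆ ground n ∧ t ≤ (I ∩ Y).card ∧ I.card < k := by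
  simp [traceFamily]

lemma card_trace_le {n k t j : ℕ} {Y y : Finset ℕ} (hY : Y ⊆ ground n)
    (hy : y ∈ powersetCard j Y) {H : Finset (Finset ℕ)} (hH : H ⊆ traceFamily n k t Y) :
    (H.filter fun I => I ∩ Y = y).card ≤ smallCount (n - Y.card) (k - j) := by
  refine card_le_smallCount_of_trace hY (y := y) fun I hI => ?_
  obtain ⟨hIH, rfl⟩ := mem_filter.1 hI
  obtain ⟨h1, -, h3⟩ := mem_traceFamily.1 (hH hIH)
  have h4 := (mem_powersetCard.1 hy).2
  have h5 := card_sdiff_add_card_inter I Y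
  exact ⟨h1, rfl, by omega⟩

lemma smallCount_le_card_trace {n k t j : ℕ} {Y y : Finset ℕ} (hY : Y ⊆ ground n)
    (hy : y ∈ powersetCard j Y) (hj : t ≤ j) :
    smallCount (n - Y.card) (k - j) ≤ ((traceFamily n k t Y).filter fun I => I ∩ Y = y).card := by
  obtain ⟨hyY, rfl⟩ := mem_powersetCard.1 hy
  have hc : (ground n \ Y).card = n - Y.card := by
    rw [card_sdiff_of_subset hY, card_ground]
  rw [← hc, ← card_filter_card_lt]
  have key : ∀ X ⊆ ground n \ Y, (y ∪ X) ∩ Y = y ∧ (y ∪ X) \ Y = X := by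
    intro X hX
    have hd : ∀ a ∈ X, a ∉ Y := fun a ha => (mem_sdiff.1 (hX ha)).2
    constructor <;> ext a <;> have h1 := hd a <;> have h2 := @hyY a <;>
      simp only [mem_inter, mem_union, mem_sdiff] <;> tauto
  refine card_le_card_of_injOn (fun X => y ∪ X) (fun X hX => ?_) fun X hX X' hX' hXX' => ?_
  · simp only [coe_filter, Set.mem_ofPred_eq, mem_powerset] at hX
    have hk := key X hX.1
    have h5 := card_union_le y X
    simp only [coe_filter, Set.mem_ofPred_eq, mem_traceFamily, hk.1]
    exact ⟨⟨union_subset (hyY.trans hY) (hX.1.trans sdiff_subset), hj, by omega⟩, trivial⟩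
  · simp only [coe_filter, Set.mem_ofPred_eq, mem_powerset] at hX hX'
    dsimp only at hXX'
    rw [← (key X hX.1).2, ← (key X' hX'.1).2, hXX']

lemma card_traceFamily {n k t : ℕ} {Y : Finset ℕ} (hY : Y ⊆ ground n) (hc : Y.card = t + 2) :
    (traceFamily n k t Y).card = (t + 2).choose 2 * smallCount (n - (t + 2)) (k - t)
      + (t + 2) * smallCount (n - (t + 2)) (k - (t + 1))
      + smallCount (n - (t + 2)) (k - (t + 2)) := by
  have hfib : ∀ j, t ≤ j → ∑ y ∈ powersetCard j Y,
      ((traceFamily n k t Y).filter fun I => I ∩ Y = y).card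
        = (t + 2).choose j * smallCount (n - (t + 2)) (k - j) := by
    intro j hj
    rw [sum_congr rfl fun y hy => le_antisymm (card_trace_le hY hy subset_rfl)
      (smallCount_le_card_trace hY hy hj), sum_const, card_powersetCard, hc, smul_eq_mul]
  rw [card_eq_sum_traces hc fun I hI => (mem_traceFamily.1 hI).2.1, hfib t le_rfl,
    hfib (t + 1) (by omega), hfib (t + 2) (by omega), Nat.choose_self, one_mul,
    Nat.choose_succ_self_right (t + 1), Nat.choose_symm_add]

lemma mem_dInt {A : Finset (Finset ℕ)} {I : Finset ℕ} :
    I ∈ dInt A A ↔ ∃ P ∈ A, ∃ P' ∈ A, P ≠ P' ∧ P ∩ P' = I := by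
  simp only [dInt, mem_image, mem_filter, mem_product, Prod.exists]
  constructor
  · rintro ⟨P, P', ⟨⟨h1, h2⟩, h3⟩, h4⟩
    exact ⟨P, h1, P', h2, h3, h4⟩
  · rintro ⟨P, h1, P', h2, h3, h4⟩
    exact ⟨P, P', ⟨⟨h1, h2⟩, h3⟩, h4⟩

lemma card_inter_lt {n k : ℕ} {P P' : Finset ℕ} (hP : P ∈ ksets n k) (hP' : P' ∈ ksets n k)
    (hne : P ≠ P') : (P ∩ P').card < k := by
  have h1 := (mem_powersetCard.1 hP).2
  have h2 := (mem_powersetCard.1 hP').2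
  by_contra! h
  exact hne ((eq_of_subset_of_card_le inter_subset_left (by omega)).symm.trans
    (eq_of_subset_of_card_le inter_subset_right (by omega)))

lemma dInt_subset_traceFamily {n k t : ℕ} {Y : Finset ℕ} (hc : Y.card = t + 2)
    {G : Finset (Finset ℕ)} (hG : G ⊆ ksets n k) (hGY : ∀ P ∈ G, t + 1 ≤ (P ∩ Y).card) :
    dInt G G ⊆ traceFamily n k t Y := by
  intro I hI
  obtain ⟨P, hP, P', hP', hne, rfl⟩ := mem_dInt.1 hI
  refine mem_traceFamily.2 ⟨inter_subset_left.trans (mem_powersetCard.1 (hG hP)).1, ?_,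
    card_inter_lt (hG hP) (hG hP') hne⟩
  have h1 := card_union_add_card_inter (P ∩ Y) (P' ∩ Y)
  have h2 : ((P ∩ Y) ∪ (P' ∩ Y)).card ≤ Y.card :=
    card_le_card (union_subset inter_subset_right inter_subset_right)
  have h3 := hGY P hP
  have h4 := hGY P' hP'
  rw [← inter_inter_distrib_right] at h1
  omega

lemma traceFamily_subset_dInt_Ankt {n k t : ℕ} (hn : 3 * k + (t + 2) ≤ n) :
    traceFamily n k t (ground (t + 2)) ⊆ dInt (Ankt n k t) (Ankt n k t) := by
  intro I hI
  obtain ⟨hIn, hIt, hIk⟩ := mem_traceFamily.1 hI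
  set Y := ground (t + 2) with hYdef
  have hYc : Y.card = t + 2 := card_ground _
  have hYn : Y ⊆ ground n := by
    intro a ha
    simp only [hYdef, ground, mem_Icc] at ha ⊢
    omega
  have build : ∀ E E' : Finset ℕ, E ⊆ ground n \ I → E' ⊆ ground n \ I → Disjoint E E' →
      E.card = k - I.card → E'.card = k - I.card → t + 1 ≤ ((I ∪ E) ∩ Y).card →
      t + 1 ≤ ((I ∪ E') ∩ Y).card → I ∈ dInt (Ankt n k t) (Ankt n k t) := by
    intro E E' hE hE' hd hc hc' hY hY'
    have hmem : ∀ D : Finset ℕ, D ⊆ ground n \ I → D.card = k - I.card →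
        t + 1 ≤ ((I ∪ D) ∩ Y).card → I ∪ D ∈ Ankt n k t := by
      intro D hD hDc hDY
      refine mem_filter.2 ⟨mem_powersetCard.2 ⟨union_subset hIn (hD.trans sdiff_subset), ?_⟩, hDY⟩
      rw [card_union_of_disjoint (disjoint_of_subset_right hD disjoint_sdiff)]
      omega
    have hinter : (I ∪ E) ∩ (I ∪ E') = I := by
      rw [← union_inter_distrib_left, disjoint_iff_inter_eq_empty.1 hd, union_empty]
    refine mem_dInt.2 ⟨_, hmem E hE hc hY, _, hmem E' hE' hc' hY', fun h => ?_, hinter⟩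
    rw [← h, inter_self] at hinter
    have h1 : E ⊆ I := union_eq_left.1 hinter
    have h2 : E = ∅ := by
      refine eq_empty_of_forall_notMem fun a ha => ?_
      exact (mem_sdiff.1 (hE ha)).2 (h1 ha)
    rw [h2, card_empty] at hc
    omega
  have hfree : 2 * k ≤ ((ground n \ I) \ Y).card := by
    have h1 := le_card_sdiff I (ground n)
    have h2 := le_card_sdiff Y (ground n \ I)
    rw [card_ground] at h1
    omega
  have hpick : ∀ e ≤ k, ∃ X X', X ⊆ (ground n \ I) \ Y ∧ X' ⊆ (ground n \ I) \ Y ∧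
      Disjoint X X' ∧ X.card = e ∧ X'.card = e := by
    intro e he
    obtain ⟨X, hX, hXc⟩ := exists_subset_card_eq (s := (ground n \ I) \ Y) (n := e) (by omega)
    have h3 := le_card_sdiff X ((ground n \ I) \ Y)
    obtain ⟨X', hX', hXc'⟩ := exists_subset_card_eq (s := ((ground n \ I) \ Y) \ X) (n := e)
      (by omega)
    exact ⟨X, X', hX, hX'.trans sdiff_subset,
      (disjoint_of_subset_left hX' sdiff_disjoint).symm, hXc, hXc'⟩
  rcases Nat.lt_or_ge t (I ∩ Y).card with h | h
  · obtain ⟨X, X', hX, hX', hd, hc, hc'⟩ := hpick (k - I.card) (by omega)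
    have hle : ∀ D : Finset ℕ, t + 1 ≤ ((I ∪ D) ∩ Y).card := fun D =>
      h.trans_le (card_le_card (inter_subset_inter_right subset_union_left))
    exact build X X' (hX.trans sdiff_subset) (hX'.trans sdiff_subset) hd hc hc' (hle X) (hle X')
  · have hYI : 1 < (Y \ I).card := by
      have h1 := card_sdiff_add_card_inter Y I
      rw [inter_comm] at h1
      omega
    obtain ⟨z, hz, z', hz', hzz⟩ := one_lt_card.1 hYI
    obtain ⟨X, X', hX, hX', hd, hc, hc'⟩ := hpick (k - I.card - 1) (by omega)
    have hsub : ∀ (a : ℕ) (D : Finset ℕ), a ∈ Y \ I → D ⊆ (ground n \ I) \ Y →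
        D.card = k - I.card - 1 → insert a D ⊆ ground n \ I ∧ (insert a D).card = k - I.card ∧
          t + 1 ≤ ((I ∪ insert a D) ∩ Y).card := by
      intro a D ha hD hDc
      obtain ⟨haY, haI⟩ := mem_sdiff.1 ha
      have haD : a ∉ D := fun h => (mem_sdiff.1 (hD h)).2 haY
      refine ⟨insert_subset (mem_sdiff.2 ⟨hYn haY, haI⟩) (hD.trans sdiff_subset), ?_, ?_⟩
      · rw [card_insert_of_notMem haD]
        omega
      · have h1 : insert a (I ∩ Y) ⊆ (I ∪ insert a D) ∩ Y := by
          intro b hb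
          simp only [mem_insert, mem_inter, mem_union] at hb ⊢
          rcases hb with rfl | hb
          · exact ⟨Or.inr (Or.inl rfl), haY⟩
          · exact ⟨Or.inl hb.1, hb.2⟩
        have h2 := card_le_card h1
        rw [card_insert_of_notMem (fun h => haI (mem_inter.1 h).1)] at h2
        omega
    obtain ⟨s1, s2, s3⟩ := hsub z X hz hX hc
    obtain ⟨s1', s2', s3'⟩ := hsub z' X' hz' hX' hc'
    refine build _ _ s1 s1' ?_ s2 s2' s3 s3'
    rw [disjoint_insert_left, disjoint_insert_right, mem_insert]
    refine ⟨?_, fun h => (mem_sdiff.1 (hX h)).2 (mem_sdiff.1 hz').1, hd⟩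
    rintro (h | h)
    · exact hzz h
    · exact (mem_sdiff.1 (hX' h)).2 (mem_sdiff.1 hz).1

/-- If no proper subset of a member of `W` has `t` elements in common with every member of `T`, few
members of `W` contain a given set. -/
lemma card_filter_superset_le {t d : ℕ} {W T : Finset (Finset ℕ)}
    (hW : ∀ w ∈ W, w.card = t + d) (hT : ∀ g ∈ T, g.card ≤ t + d)
    (hWT : ∀ w ∈ W, ∀ g ∈ T, t ≤ (w ∩ g).card)
    (hmin : ∀ w ∈ W, ∀ x ⊂ w, ∃ g ∈ T, (x ∩ g).card < t) (i : ℕ) (X : Finset ℕ)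
    (hX : X.card + i = t + d) : (W.filter fun w => X ⊆ w).card ≤ (d + 1) ^ i := by
  induction i generalizing X with
  | zero =>
    rw [pow_zero, card_le_one]
    have heq : ∀ w ∈ W.filter fun w => X ⊆ w, X = w := by
      intro w hw
      obtain ⟨hw, hXw⟩ := mem_filter.1 hw
      exact eq_of_subset_of_card_le hXw (by rw [hW w hw]; omega)
    intro w hw w' hw'
    rw [← heq w hw, ← heq w' hw']
  | succ i ih =>
    rcases (W.filter fun w => X ⊆ w).eq_empty_or_nonempty with h0 | ⟨w₀, hw₀⟩
    · rw [h0, card_empty]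
      exact Nat.zero_le _
    obtain ⟨hw₀, hXw₀⟩ := mem_filter.1 hw₀
    have hss : X ⊂ w₀ := by
      refine hXw₀.ssubset_of_ne fun h => ?_
      have := hW w₀ hw₀
      rw [← h] at this
      omega
    obtain ⟨g, hg, hXg⟩ := hmin w₀ hw₀ X hss
    obtain ⟨D, hD, hDc⟩ := exists_subset_card_eq (s := g \ X) (n := min (d + 1) (g \ X).card)
      (min_le_right _ _)
    have hcover : (W.filter fun w => X ⊆ w) ⊆
        D.biUnion fun u => W.filter fun w => insert u X ⊆ w := by
      intro w hw
      obtain ⟨hw, hXw⟩ := mem_filter.1 hw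
      have hmeet : (w ∩ D).Nonempty := by
        by_contra hne
        rw [not_nonempty_iff_eq_empty] at hne
        have h1 : w ∩ g ⊆ (X ∩ g) ∪ ((g \ X) \ D) := by
          intro a ha
          have h2 : a ∉ w ∩ D := by simp [hne]
          simp only [mem_inter, mem_union, mem_sdiff] at ha h2 ⊢
          tauto
        have h3 := (hWT w hw g hg).trans ((card_le_card h1).trans (card_union_le _ _))
        have h4 := card_sdiff_add_card_inter g X
        rw [inter_comm] at h4
        have h5 := hT g hg
        rw [card_sdiff_of_subset hD] at h3
        omega
      obtain ⟨u, hu⟩ := hmeet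
      obtain ⟨huw, huD⟩ := mem_inter.1 hu
      exact mem_biUnion.2 ⟨u, huD, mem_filter.2 ⟨hw, insert_subset huw hXw⟩⟩
    calc (W.filter fun w => X ⊆ w).card
        ≤ ∑ u ∈ D, (W.filter fun w => insert u X ⊆ w).card :=
          (card_le_card hcover).trans card_biUnion_le
      _ ≤ ∑ u ∈ D, (d + 1) ^ i := by
          refine sum_le_sum fun u hu => ih _ ?_
          rw [card_insert_of_notMem (mem_sdiff.1 (hD hu)).2]
          omega
      _ ≤ (d + 1) ^ (i + 1) := by
          rw [sum_const, smul_eq_mul, pow_succ, mul_comm]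
          exact Nat.mul_le_mul_left _ (by omega)

lemma card_le_of_minimal {t d : ℕ} {W T : Finset (Finset ℕ)} (hsub : W ⊆ T)
    (hW : ∀ w ∈ W, w.card = t + d) (hT : ∀ g ∈ T, g.card ≤ t + d)
    (hTT : tIntersecting t T)
    (hmin : ∀ w ∈ W, ∀ x ⊂ w, ∃ g ∈ T, (x ∩ g).card < t) :
    W.card ≤ (t + d).choose d * (d + 1) ^ d := by
  rcases W.eq_empty_or_nonempty with rfl | ⟨g, hg⟩
  · simp
  have hcover : W ⊆ (powersetCard t g).biUnion fun X => W.filter fun w => X ⊆ w := by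
    intro w hw
    obtain ⟨X, hX, hXc⟩ := exists_subset_card_eq (hTT w (hsub hw) g (hsub hg))
    exact mem_biUnion.2 ⟨X, mem_powersetCard.2 ⟨hX.trans inter_subset_right, hXc⟩,
      mem_filter.2 ⟨hw, hX.trans inter_subset_left⟩⟩
  calc W.card ≤ ∑ X ∈ powersetCard t g, (W.filter fun w => X ⊆ w).card :=
        (card_le_card hcover).trans card_biUnion_le
    _ ≤ ∑ X ∈ powersetCard t g, (d + 1) ^ d := by
        refine sum_le_sum fun X hX => card_filter_superset_le hW hT
          (fun w hw g hg => hTT w (hsub hw) g hg) hmin d X ?_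
        rw [(mem_powersetCard.1 hX).2]
    _ = (t + d).choose d * (d + 1) ^ d := by
        rw [sum_const, card_powersetCard, hW g hg, smul_eq_mul, Nat.choose_symm_add]

/-- Sets missing at most `d` elements of `w` and having fewer than `i` elements outside `w`. -/
lemma card_near_le {n d i m : ℕ} {w : Finset ℕ} (hw : w ⊆ ground n) (hm : n - w.card ≤ m) :
    ((ground n).powerset.filter fun I => (w \ I).card < d ∧ (I \ w).card < i).card ≤
      smallCount w.card d * smallCount m i := by
  have hc : (ground n \ w).card = n - w.card := by
    rw [card_sdiff_of_subset hw, card_ground]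
  refine le_trans ?_ (Nat.mul_le_mul_left _ (smallCount_mono_left hm i))
  rw [← hc, ← card_filter_card_lt, ← card_filter_card_lt, ← card_product]
  refine card_le_card_of_injOn (fun I => (w \ I, I \ w)) (fun I hI => ?_)
    fun I hI I' hI' h => ?_
  · simp only [coe_filter, Set.mem_ofPred_eq, mem_powerset] at hI
    simp only [coe_product, Set.mem_prod, coe_filter, Set.mem_ofPred_eq, mem_powerset]
    exact ⟨⟨sdiff_subset, hI.2.1⟩, sdiff_subset_sdiff hI.1 le_rfl, hI.2.2⟩
  · simp only [Prod.mk.injEq] at h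
    ext a
    have h1 := Finset.ext_iff.1 h.1 a
    have h2 := Finset.ext_iff.1 h.2 a
    simp only [mem_sdiff] at h1 h2
    tauto

/-- `T` is a `t`-intersecting family of sets of size at most `s` such that every member of `G`
contains a member of `T`. -/
structure IsKernel (n t s : ℕ) (G T : Finset (Finset ℕ)) : Prop where
  subset_ground : ∀ w ∈ T, w ⊆ ground n
  card_le : ∀ w ∈ T, w.card ≤ s
  inter : tIntersecting t T
  cover : ∀ P ∈ G, ∃ w ∈ T, w ⊆ P

/-- Bounds the number of members of a minimal kernel of size `t + d`, multiplied by the number of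
possible traces of an intersection on such a member. -/
def kernelWeight (t d : ℕ) : ℕ :=
  (t + d).choose d * (d + 1) ^ d * smallCount (t + d) (d + 1)

lemma IsKernel.exists_minimal {n t s : ℕ} {G T : Finset (Finset ℕ)} (hT : IsKernel n t s G T) :
    ∃ T', IsKernel n t s G T' ∧ ∀ w ∈ T', ∀ x ⊂ w, ∃ g ∈ T', (x ∩ g).card < t := by
  induction hN : ∑ w ∈ T, w.card using Nat.strong_induction_on generalizing T with
  | _ N ih =>
    by_cases hmin : ∀ w ∈ T, ∀ x ⊂ w, ∃ g ∈ T, (x ∩ g).card < t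
    · exact ⟨T, hT, hmin⟩
    push Not at hmin
    obtain ⟨w, hw, x, hxw, hx⟩ := hmin
    have hxx : t ≤ x.card := by
      have := hx w hw
      rwa [inter_eq_left.2 hxw.subset] at this
    refine ih (∑ v ∈ insert x (T.erase w), v.card) ?_ (T := insert x (T.erase w)) ?_ rfl
    · have h1 : ∑ v ∈ insert x (T.erase w), v.card ≤ x.card + ∑ v ∈ T.erase w, v.card := by
        by_cases h : x ∈ T.erase w
        · rw [insert_eq_of_mem h]
          exact Nat.le_add_left _ _
        · rw [sum_insert h]
      have h2 := add_sum_erase T Finset.card hw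
      have h3 := card_lt_card hxw
      omega
    · refine ⟨fun v hv => ?_, fun v hv => ?_, fun v hv v' hv' => ?_, fun P hP => ?_⟩
      · rcases mem_insert.1 hv with rfl | hv
        · exact hxw.subset.trans (hT.subset_ground w hw)
        · exact hT.subset_ground v (mem_of_mem_erase hv)
      · rcases mem_insert.1 hv with rfl | hv
        · exact (card_le_card hxw.subset).trans (hT.card_le w hw)
        · exact hT.card_le v (mem_of_mem_erase hv)
      · rcases mem_insert.1 hv with h | h <;> rcases mem_insert.1 hv' with h' | h'
        · rwa [h, h', inter_self]
        · rw [h]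
          exact hx v' (mem_of_mem_erase h')
        · rw [h', inter_comm]
          exact hx v (mem_of_mem_erase h)
        · exact hT.inter v (mem_of_mem_erase h) v' (mem_of_mem_erase h')
      · obtain ⟨v, hv, hvP⟩ := hT.cover P hP
        by_cases h : v = w
        · exact ⟨x, mem_insert_self _ _, hxw.subset.trans (h ▸ hvP)⟩
        · exact ⟨v, mem_insert_of_mem (mem_erase.2 ⟨h, hv⟩), hvP⟩

lemma IsKernel.exists_shrink {n k t d m : ℕ} {G T : Finset (Finset ℕ)} (hG : G ⊆ ksets n k)
    (hk : t + (d + 1) ≤ k) (hm : n - (t + (d + 1)) ≤ m) (hT : IsKernel n t (t + (d + 1)) G T) :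
    ∃ G' ⊆ G, ∃ T', IsKernel n t (t + d) G' T' ∧
      (dInt G G).card ≤ (dInt G' G').card + kernelWeight t (d + 1) * smallCount m (k - t - d) := by
  obtain ⟨T, hT, hmin⟩ := hT.exists_minimal
  set W := T.filter fun w => w.card = t + (d + 1) with hW
  set T' := T.filter fun w => w.card ≤ t + d with hT'
  set G' := G.filter fun P => ∃ w ∈ T', w ⊆ P with hG'
  refine ⟨G', filter_subset _ _, T', ⟨fun w hw => hT.subset_ground w (mem_filter.1 hw).1,
    fun w hw => (mem_filter.1 hw).2,
    fun w hw w' hw' => hT.inter w (mem_filter.1 hw).1 w' (mem_filter.1 hw').1,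
    fun P hP => (mem_filter.1 hP).2⟩, ?_⟩
  set near : Finset ℕ → Finset (Finset ℕ) := fun w =>
    (ground n).powerset.filter fun I => (w \ I).card < d + 1 + 1 ∧ (I \ w).card < k - t - d
    with hnear
  have hmem : ∀ P ∈ G, ∀ P' ∈ G, P ∉ G' → P ∩ P' ∈ W.biUnion near := by
    intro P hP P' hP' hPG
    obtain ⟨w, hw, hwP⟩ := hT.cover P hP
    obtain ⟨g, hg, hgP⟩ := hT.cover P' hP'
    have hwW : w.card = t + (d + 1) := by
      have h1 := hT.card_le w hw
      by_contra h
      exact hPG (mem_filter.2 ⟨hP, w, mem_filter.2 ⟨hw, by omega⟩, hwP⟩)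
    obtain ⟨hPn, hPk⟩ := mem_powersetCard.1 (hG hP)
    refine mem_biUnion.2 ⟨w, mem_filter.2 ⟨hw, hwW⟩, mem_filter.2
      ⟨mem_powerset.2 (inter_subset_left.trans hPn), ?_, ?_⟩⟩
    · have h1 := (hT.inter w hw g hg).trans (card_le_card (inter_subset_inter_left hgP))
      have h2 : w \ (P ∩ P') = w \ P' := by
        ext a
        have := @hwP a
        simp only [mem_sdiff, mem_inter]
        tauto
      have h3 := card_sdiff_add_card_inter w P'
      rw [h2]
      omega
    · have h1 : (P ∩ P') \ w ⊆ P \ w := sdiff_subset_sdiff inter_subset_left le_rfl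
      have h2 := card_le_card h1
      rw [card_sdiff_of_subset hwP] at h2
      omega
  have hcover : dInt G G ⊆ dInt G' G' ∪ W.biUnion near := by
    intro I hI
    obtain ⟨P, hP, P', hP', hne, rfl⟩ := mem_dInt.1 hI
    by_cases h : P ∈ G'
    · by_cases h' : P' ∈ G'
      · exact mem_union_left _ (mem_dInt.2 ⟨P, h, P', h', hne, rfl⟩)
      · rw [inter_comm]
        exact mem_union_right _ (hmem P' hP' P hP h')
    · exact mem_union_right _ (hmem P hP P' hP' h)
  have hWc : W.card ≤ (t + (d + 1)).choose (d + 1) * (d + 1 + 1) ^ (d + 1) :=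
    card_le_of_minimal (filter_subset _ _) (fun w hw => (mem_filter.1 hw).2) hT.card_le hT.inter
      fun w hw => hmin w (mem_filter.1 hw).1
  refine (card_le_card hcover).trans ((card_union_le _ _).trans (Nat.add_le_add_left ?_ _))
  calc (W.biUnion near).card ≤ ∑ w ∈ W, (near w).card := card_biUnion_le
    _ ≤ ∑ w ∈ W, smallCount (t + (d + 1)) (d + 1 + 1) * smallCount m (k - t - d) := by
        refine sum_le_sum fun w hw => ?_
        obtain ⟨hw, hwc⟩ := mem_filter.1 hw
        rw [← hwc]
        exact card_near_le (hT.subset_ground w hw) (hwc ▸ hm)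
    _ ≤ kernelWeight t (d + 1) * smallCount m (k - t - d) := by
        rw [sum_const, smul_eq_mul, kernelWeight, ← mul_assoc]
        gcongr

lemma IsKernel.exists_reduced {n k t : ℕ} (c : ℕ) {G T : Finset (Finset ℕ)} (hG : G ⊆ ksets n k)
    (hk : t + (c + 1) ≤ k) (hT : IsKernel n t (t + (c + 1)) G T) :
    ∃ G' ⊆ G, ∃ T', IsKernel n t (t + 1) G' T' ∧
      (dInt G G).card ≤ (dInt G' G').card
        + ∑ i ∈ range c, kernelWeight t (i + 2) * smallCount (n - (t + 2)) (k - t - (i + 1)) := by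
  induction c generalizing G T with
  | zero => exact ⟨G, subset_rfl, T, hT, by simp⟩
  | succ c ih =>
    obtain ⟨G₁, hG₁, T₁, hT₁, h₁⟩ := hT.exists_shrink (m := n - (t + 2)) hG hk (by omega)
    obtain ⟨G₂, hG₂, T₂, hT₂, h₂⟩ := ih (hG₁.trans hG) (by omega) hT₁
    refine ⟨G₂, hG₂.trans hG₁, T₂, hT₂, ?_⟩
    rw [sum_range_succ]
    have : c + 1 + 1 = c + 2 := rfl
    rw [this] at h₁
    omega

lemma card_le_of_traces {n k t B : ℕ} {Y y₀ : Finset ℕ} (hY : Y ⊆ ground n) (hc : Y.card = t + 2)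
    (hy₀ : y₀ ∈ powersetCard t Y) {H : Finset (Finset ℕ)} (hH : H ⊆ traceFamily n k t Y)
    (hB : ∀ y ∈ powersetCard t Y, y ≠ y₀ → (H.filter fun I => I ∩ Y = y).card ≤ B) :
    H.card ≤ smallCount (n - (t + 2)) (k - t) + ((t + 2).choose 2 - 1) * B
      + (t + 2) * smallCount (n - (t + 2)) (k - (t + 1))
      + smallCount (n - (t + 2)) (k - (t + 2)) := by
  have hfib : ∀ j, ∑ y ∈ powersetCard j Y, (H.filter fun I => I ∩ Y = y).card
      ≤ (t + 2).choose j * smallCount (n - (t + 2)) (k - j) := by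
    intro j
    rw [← hc, ← card_powersetCard, ← smul_eq_mul]
    exact sum_le_card_nsmul _ _ _ fun y hy => card_trace_le hY hy hH
  have h1 := hfib (t + 1)
  have h2 := hfib (t + 2)
  rw [Nat.choose_succ_self_right (t + 1)] at h1
  rw [Nat.choose_self, one_mul] at h2
  have h0 := card_trace_le hY hy₀ hH
  have h3 : ∑ y ∈ (powersetCard t Y).erase y₀, (H.filter fun I => I ∩ Y = y).card
      ≤ ((t + 2).choose 2 - 1) * B := by
    have h4 : ((powersetCard t Y).erase y₀).card = (t + 2).choose 2 - 1 := by
      rw [card_erase_of_mem hy₀, card_powersetCard, hc, Nat.choose_symm_add]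
    rw [← h4, ← smul_eq_mul]
    exact sum_le_card_nsmul _ _ _ fun y hy => hB y (mem_erase.1 hy).2 (mem_erase.1 hy).1
  rw [hc] at h0
  rw [card_eq_sum_traces hc fun I hI => (mem_traceFamily.1 (hH hI)).2.1, ← add_sum_erase _ _ hy₀]
  have : t + 1 + 1 = t + 2 := rfl
  rw [this] at h1
  omega

/-- A `t`-intersecting family of sets of size at most `t + 1` has a common `t`-subset or consists
of `(t + 1)`-subsets of a `(t + 2)`-set. -/
lemma exists_common_or_superset {n t : ℕ} (htn : t ≤ n) {T : Finset (Finset ℕ)}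
    (hTn : ∀ w ∈ T, w ⊆ ground n) (hTc : ∀ w ∈ T, w.card ≤ t + 1) (hT : tIntersecting t T) :
    (∃ C ⊆ ground n, C.card = t ∧ ∀ w ∈ T, C ⊆ w) ∨
      ∃ Y ⊆ ground n, Y.card = t + 2 ∧ ∀ w ∈ T, t + 1 ≤ (w ∩ Y).card := by
  rw [or_iff_not_imp_left]
  intro hno
  push Not at hno
  have hcard : ∀ w ∈ T, w.card = t + 1 := by
    intro w hw
    by_contra hne
    have h0 := hT w hw w hw
    rw [inter_self] at h0
    have h1 := hTc w hw
    obtain ⟨w', hw', h2⟩ := hno w (hTn w hw) (by omega)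
    refine h2 ?_
    have h3 := hT w hw w' hw'
    exact inter_eq_left.1 (eq_of_subset_of_card_le inter_subset_left (by omega))
  obtain ⟨C₀, hC₀, hC₀c⟩ := exists_subset_card_eq (s := ground n) (n := t) (by rwa [card_ground])
  obtain ⟨w₁, hw₁, -⟩ := hno C₀ hC₀ hC₀c
  obtain ⟨C₁, hC₁, hC₁c⟩ := exists_subset_card_eq (s := w₁) (n := t) (by have := hcard w₁ hw₁; omega)
  obtain ⟨w₂, hw₂, hC₁₂⟩ := hno C₁ (hC₁.trans (hTn w₁ hw₁)) hC₁c
  have hne : w₁ ≠ w₂ := fun h => hC₁₂ (h ▸ hC₁)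
  have c₁ := hcard w₁ hw₁
  have c₂ := hcard w₂ hw₂
  have hc : (w₁ ∩ w₂).card = t := by
    refine le_antisymm ?_ (hT w₁ hw₁ w₂ hw₂)
    by_contra! h
    exact hne ((eq_of_subset_of_card_le inter_subset_left (by omega)).symm.trans
      (eq_of_subset_of_card_le inter_subset_right (by omega)))
  have hYc : (w₁ ∪ w₂).card = t + 2 := by
    have := card_union_add_card_inter w₁ w₂
    omega
  have hout : ∀ w ∈ T, ¬ w ⊆ w₁ ∪ w₂ → w₁ ∩ w₂ ⊆ w ∧ (w ∩ (w₁ ∪ w₂)).card ≤ t := by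
    intro w hw hnot
    have h1 : (w ∩ (w₁ ∪ w₂)).card ≤ t := by
      by_contra! h
      exact hnot (inter_eq_left.1 (eq_of_subset_of_card_le inter_subset_left
        (by have := hcard w hw; omega)))
    have h2 : w ∩ w₁ = w ∩ (w₁ ∪ w₂) := eq_of_subset_of_card_le
      (inter_subset_inter_left subset_union_left) (h1.trans (hT w hw w₁ hw₁))
    have h3 : w ∩ w₂ = w ∩ (w₁ ∪ w₂) := eq_of_subset_of_card_le
      (inter_subset_inter_left subset_union_right) (h1.trans (hT w hw w₂ hw₂))
    have h4 : w ∩ w₁ ⊆ w₁ ∩ w₂ := by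
      refine subset_inter inter_subset_right ?_
      rw [h2, ← h3]
      exact inter_subset_right
    have h5 := eq_of_subset_of_card_le h4 (by rw [hc]; exact hT w hw w₁ hw₁)
    exact ⟨h5 ▸ inter_subset_left, h1⟩
  obtain ⟨w₃, hw₃, h₃⟩ := hno (w₁ ∩ w₂) (inter_subset_left.trans (hTn w₁ hw₁)) hc
  have hw₃Y : w₃ ⊆ w₁ ∪ w₂ := by
    by_contra h
    exact h₃ (hout w₃ hw₃ h).1
  refine ⟨w₁ ∪ w₂, union_subset (hTn w₁ hw₁) (hTn w₂ hw₂), hYc, fun w hw => ?_⟩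
  by_contra hlt
  have hnot : ¬ w ⊆ w₁ ∪ w₂ := fun h => hlt (by rw [inter_eq_left.2 h, hcard w hw])
  obtain ⟨hC, hle⟩ := hout w hw hnot
  have h6 : w₁ ∩ w₂ = w ∩ (w₁ ∪ w₂) := eq_of_subset_of_card_le
    (subset_inter hC (inter_subset_left.trans subset_union_left)) (by omega)
  have h7 : w ∩ w₃ ⊆ w₁ ∩ w₂ := by
    rw [h6]
    exact inter_subset_inter_left hw₃Y
  have h8 := eq_of_subset_of_card_le h7 (by rw [hc]; exact hT w hw w₃ hw₃)
  exact h₃ (h8 ▸ inter_subset_right)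

/-- If all of `G`, but not all of `F`, meets the `(t + 2)`-set `Y` in at least `t + 1` elements, only
one trace of size `t` on `Y` is frequent among the intersections of members of `G`. -/
lemma card_dInt_le_of_exceptional {n k t : ℕ} (ht : 1 ≤ t) {Y P₀ : Finset ℕ}
    (hY : Y ⊆ ground n) (hc : Y.card = t + 2) {G : Finset (Finset ℕ)} (hG : G ⊆ ksets n k)
    (hGY : ∀ P ∈ G, t + 1 ≤ (P ∩ Y).card) (hP₀k : P₀.card = k) (hP₀Y : (P₀ ∩ Y).card ≤ t)
    (hP₀ : ∀ P ∈ G, t ≤ (P ∩ P₀).card) :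
    (dInt G G).card ≤ smallCount (n - (t + 2)) (k - t)
      + ((t + 2).choose 2 - 1) * ((k + 1) * smallCount (n - (t + 2)) (k - (t + 1)))
      + (t + 2) * smallCount (n - (t + 2)) (k - (t + 1))
      + smallCount (n - (t + 2)) (k - (t + 2)) := by
  have hsub := dInt_subset_traceFamily hc hG hGY
  obtain ⟨y₀, hy₀, hy₀Y, hy₀c⟩ := exists_subsuperset_card_eq (s := P₀ ∩ Y) (t := Y)
    inter_subset_right hP₀Y (by omega : t ≤ Y.card)
  refine card_le_of_traces hY hc (mem_powersetCard.2 ⟨hy₀Y, hy₀c⟩) hsub fun y hy hne => ?_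
  obtain ⟨hyY, hyc⟩ := mem_powersetCard.1 hy
  obtain ⟨z, hz₀, hzy⟩ : ∃ z ∈ y₀, z ∉ y := by
    by_contra! h
    exact hne (eq_of_subset_of_card_le h (by omega)).symm
  set H := (dInt G G).filter fun I => I ∩ Y = y with hH
  have key : ∀ P ∈ G, ∀ I ⊆ P, z ∉ P → (∃ u ∈ P₀ \ Y, u ∈ I) ∨ (I \ Y).card < k - (t + 1) := by
    intro P hP I hIP hzP
    obtain ⟨u, huP, hu⟩ : ∃ u ∈ P, u ∈ P₀ \ Y := by
      by_contra! h
      have h1 : P ∩ P₀ ⊆ y₀.erase z := by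
        intro a ha
        obtain ⟨haP, haP₀⟩ := mem_inter.1 ha
        have haY : a ∈ Y := by
          by_contra haY
          exact h a haP (mem_sdiff.2 ⟨haP₀, haY⟩)
        exact mem_erase.2 ⟨fun h => hzP (h ▸ haP), hy₀ (mem_inter.2 ⟨haP₀, haY⟩)⟩
      have h2 := (hP₀ P hP).trans (card_le_card h1)
      rw [card_erase_of_mem hz₀] at h2
      omega
    by_cases huI : u ∈ I
    · exact Or.inl ⟨u, hu, huI⟩
    · right
      have h1 : I \ Y ⊂ P \ Y := by
        refine (sdiff_subset_sdiff hIP le_rfl).ssubset_of_mem_notMem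
          (mem_sdiff.2 ⟨huP, (mem_sdiff.1 hu).2⟩) fun h => huI (mem_sdiff.1 h).1
      have h2 := card_lt_card h1
      have h3 := card_sdiff_add_card_inter P Y
      have h4 := hGY P hP
      have h5 := (mem_powersetCard.1 (hG hP)).2
      omega
  have hprop : ∀ I ∈ H, I ⊆ ground n ∧ I ∩ Y = y ∧ (I \ Y).card < k - t ∧
      ((∃ u ∈ P₀ \ Y, u ∈ I) ∨ (I \ Y).card < k - (t + 1)) := by
    intro I hI
    obtain ⟨hI, hIy⟩ := mem_filter.1 hI
    obtain ⟨h1, -, h3⟩ := mem_traceFamily.1 (hsub hI)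
    have h4 := card_sdiff_add_card_inter I Y
    rw [hIy, hyc] at h4
    refine ⟨h1, hIy, by omega, ?_⟩
    obtain ⟨P, hP, P', hP', -, rfl⟩ := mem_dInt.1 hI
    by_cases hzP : z ∈ P
    · refine key P' hP' _ inter_subset_right fun hzP' => hzy ?_
      rw [← hIy]
      exact mem_inter.2 ⟨mem_inter.2 ⟨hzP, hzP'⟩, hy₀Y hz₀⟩
    · exact key P hP _ inter_subset_left hzP
  have hcover : H ⊆ ((P₀ \ Y).biUnion fun u => H.filter fun I => u ∈ I) ∪
      H.filter fun I => (I \ Y).card < k - (t + 1) := by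
    intro I hI
    rcases (hprop I hI).2.2.2 with ⟨u, hu, huI⟩ | h
    · exact mem_union_left _ (mem_biUnion.2 ⟨u, hu, mem_filter.2 ⟨hI, huI⟩⟩)
    · exact mem_union_right _ (mem_filter.2 ⟨hI, h⟩)
  have hsmall : (H.filter fun I => (I \ Y).card < k - (t + 1)).card
      ≤ smallCount (n - (t + 2)) (k - (t + 1)) := by
    rw [← hc]
    refine card_le_smallCount_of_trace hY (y := y) fun I hI => ?_
    obtain ⟨hIH, hlt⟩ := mem_filter.1 hI
    exact ⟨(hprop I hIH).1, (hprop I hIH).2.1, hlt⟩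
  have hpoint : ∀ u ∈ P₀ \ Y, (H.filter fun I => u ∈ I).card
      ≤ smallCount (n - (t + 2)) (k - (t + 1)) := by
    intro u hu
    have huY := (mem_sdiff.1 hu).2
    rw [← hc, ← card_image_of_injOn (f := fun I => I.erase u) (s := H.filter fun I => u ∈ I)]
    · refine card_le_smallCount_of_trace hY (y := y) fun J hJ => ?_
      obtain ⟨I, hI, rfl⟩ := mem_image.1 hJ
      obtain ⟨hIH, huI⟩ := mem_filter.1 hI
      obtain ⟨h1, h2, h3, -⟩ := hprop I hIH
      refine ⟨(erase_subset _ _).trans h1, ?_, ?_⟩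
      · rw [erase_inter, h2, erase_eq_of_notMem fun h => huY (hyY h)]
      · rw [erase_sdiff_comm, card_erase_of_mem (mem_sdiff.2 ⟨huI, huY⟩)]
        have : 0 < (I \ Y).card := card_pos.2 ⟨u, mem_sdiff.2 ⟨huI, huY⟩⟩
        omega
    · intro I hI I' hI' h
      have h1 := (mem_filter.1 (mem_coe.1 hI)).2
      have h2 := (mem_filter.1 (mem_coe.1 hI')).2
      rw [← insert_erase h1, ← insert_erase h2]
      exact congrArg (insert u) h
  have hcardP : (P₀ \ Y).card ≤ k := hP₀k ▸ card_le_card sdiff_subset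
  calc H.card ≤ _ := card_le_card hcover
    _ ≤ _ := card_union_le _ _
    _ ≤ (P₀ \ Y).card * smallCount (n - (t + 2)) (k - (t + 1))
        + smallCount (n - (t + 2)) (k - (t + 1)) :=
      Nat.add_le_add (card_biUnion_le_card_mul _ _ _ hpoint) hsmall
    _ ≤ k * smallCount (n - (t + 2)) (k - (t + 1)) + smallCount (n - (t + 2)) (k - (t + 1)) :=
      Nat.add_le_add_right (Nat.mul_le_mul_right _ hcardP) _
    _ = (k + 1) * smallCount (n - (t + 2)) (k - (t + 1)) := by ring

lemma card_dInt_le_of_common {n k t : ℕ} (hn : t + 2 ≤ n) {C : Finset ℕ} (hC : C ⊆ ground n)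
    (hCc : C.card = t) {G : Finset (Finset ℕ)} (hG : G ⊆ ksets n k) (hGC : ∀ P ∈ G, C ⊆ P) :
    (dInt G G).card ≤ smallCount (n - (t + 2)) (k - t)
      + (t + 2) * smallCount (n - (t + 2)) (k - (t + 1))
      + smallCount (n - (t + 2)) (k - (t + 2)) := by
  obtain ⟨Y, hCY, hY, hc⟩ := exists_subsuperset_card_eq (n := t + 2) hC (by omega)
    (by rwa [card_ground])
  have hCI : ∀ I ∈ dInt G G, C ⊆ I := by
    intro I hI
    obtain ⟨P, hP, P', hP', -, rfl⟩ := mem_dInt.1 hI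
    exact subset_inter (hGC P hP) (hGC P' hP')
  have h := card_le_of_traces (k := k) (B := 0) hY hc (mem_powersetCard.2 ⟨hCY, hCc⟩)
    (H := dInt G G) (fun I hI => ?_) fun y hy hne => ?_
  · simpa using h
  · have h1 := hCI I hI
    obtain ⟨P, hP, P', hP', hne, rfl⟩ := mem_dInt.1 hI
    exact mem_traceFamily.2 ⟨inter_subset_left.trans (mem_powersetCard.1 (hG hP)).1,
      hCc ▸ card_le_card (subset_inter h1 hCY), card_inter_lt (hG hP) (hG hP') hne⟩
  · rw [Nat.le_zero, card_eq_zero, filter_eq_empty_iff]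
    rintro I hI rfl
    refine hne (eq_of_subset_of_card_le (subset_inter (hCI I hI) hCY) ?_).symm
    rw [(mem_powersetCard.1 hy).2, hCc]

lemma add_two_pow_le (d : ℕ) : (d + 2) ^ (d + 1) ≤ 4 * (d + 1) ^ (d + 1) := by
  have hpos : (0 : ℝ) < (d : ℝ) + 1 := by positivity
  have h1 : ((d : ℝ) + 2) / (d + 1) ≤ Real.exp (1 / ((d : ℝ) + 1)) := by
    refine le_trans (le_of_eq ?_) (Real.add_one_le_exp _)
    field_simp
    ring
  have h2 : (((d : ℝ) + 2) / (d + 1)) ^ (d + 1) ≤ 4 := by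
    calc (((d : ℝ) + 2) / (d + 1)) ^ (d + 1) ≤ Real.exp (1 / ((d : ℝ) + 1)) ^ (d + 1) := by gcongr
      _ = Real.exp 1 := by
        rw [← Real.exp_nat_mul]
        push_cast
        field_simp
      _ ≤ 4 := by linarith [Real.exp_one_lt_d9]
  rw [div_pow, div_le_iff₀ (by positivity)] at h2
  exact_mod_cast h2

lemma smallCount_succ_succ_le (t d : ℕ) :
    smallCount (t + (d + 1)) (d + 1 + 1) ≤ (t + 2) * smallCount (t + d) (d + 1) := by
  have h1 : smallCount (t + (d + 1)) (d + 1 + 1)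
      = smallCount (t + d) (d + 1) + smallCount (t + d) (d + 1 + 1) := by
    simp only [smallCount]
    rw [sum_range_succ' (fun j => (t + (d + 1)).choose j),
      sum_range_succ' (fun j => (t + d).choose j) (d + 1), ← add_assoc (∑ j ∈ _, _),
      ← sum_add_distrib, Nat.choose_zero_right, Nat.choose_zero_right]
    rfl
  have h2 : smallCount (t + d) (d + 1 + 1)
      = smallCount (t + d) (d + 1) + (t + d).choose (d + 1) := sum_range_succ _ _
  have h3 : (t + d).choose (d + 1) ≤ t * (t + d).choose d := by
    have h := Nat.choose_succ_right_eq (t + d) d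
    rw [Nat.add_sub_cancel] at h
    nlinarith [Nat.zero_le ((t + d).choose (d + 1) * d)]
  have h4 : (t + d).choose d ≤ smallCount (t + d) (d + 1) :=
    single_le_sum (f := fun j => (t + d).choose j) (fun _ _ => Nat.zero_le _) (by simp)
  have h5 := Nat.mul_le_mul_left t h4
  rw [h1, h2]
  linarith

lemma kernelWeight_succ_le (t d : ℕ) :
    kernelWeight t (d + 1) ≤ (t + 2) ^ 3 * (t + (d + 1)) * kernelWeight t d := by
  have h1 : (t + (d + 1)).choose (d + 1) * (d + 1) = (t + (d + 1)) * (t + d).choose d :=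
    (Nat.add_one_mul_choose_eq (t + d) d).symm
  have h2 := add_two_pow_le d
  have h3 := smallCount_succ_succ_le t d
  have h4 : 4 ≤ (t + 2) ^ 2 := by nlinarith
  unfold kernelWeight
  calc (t + (d + 1)).choose (d + 1) * (d + 1 + 1) ^ (d + 1) * smallCount (t + (d + 1)) (d + 1 + 1)
      ≤ (t + (d + 1)).choose (d + 1) * (4 * (d + 1) ^ (d + 1))
        * ((t + 2) * smallCount (t + d) (d + 1)) := by gcongr
    _ = 4 * ((t + (d + 1)).choose (d + 1) * (d + 1)) * (d + 1) ^ d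
        * ((t + 2) * smallCount (t + d) (d + 1)) := by ring
    _ ≤ (t + 2) ^ 2 * ((t + (d + 1)) * (t + d).choose d) * (d + 1) ^ d
        * ((t + 2) * smallCount (t + d) (d + 1)) := by rw [h1]; gcongr
    _ = _ := by ring

lemma kernelWeight_le {t : ℕ} (ht : 1 ≤ t) (i : ℕ) :
    kernelWeight t (i + 2) ≤ (t + 2).choose 2 * ((t + 2) ^ 3 * (t + (i + 2))) ^ (i + 1) := by
  induction i with
  | zero =>
    have h1 : smallCount (t + 2) 3 = 1 + (t + 2) + (t + 2).choose 2 := by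
      simp [smallCount, sum_range_succ]
    have h2 : (t + 2).choose 2 * 2 = (t + 2) * (t + 1) := by
      rw [Nat.choose_two_right, Nat.div_mul_cancel]
      · rfl
      · exact (Nat.even_mul_pred_self (t + 2)).two_dvd
    have h3 : 9 * (1 + (t + 2) + (t + 2).choose 2) ≤ (t + 2) ^ 3 * (t + 2) := by
      obtain ⟨a, rfl⟩ := Nat.exists_eq_add_of_le ht
      ring_nf at h2 ⊢
      nlinarith
    simp only [kernelWeight, zero_add, pow_one]
    rw [h1]
    calc _ = (t + 2).choose 2 * (9 * (1 + (t + 2) + (t + 2).choose 2)) := by ring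
      _ ≤ _ := Nat.mul_le_mul_left _ h3
  | succ i ih =>
    calc kernelWeight t (i + 1 + 2)
        ≤ (t + 2) ^ 3 * (t + (i + 1 + 2)) * kernelWeight t (i + 2) := kernelWeight_succ_le t (i + 2)
      _ ≤ (t + 2) ^ 3 * (t + (i + 1 + 2))
          * ((t + 2).choose 2 * ((t + 2) ^ 3 * (t + (i + 2))) ^ (i + 1)) := by gcongr
      _ ≤ (t + 2) ^ 3 * (t + (i + 1 + 2))
          * ((t + 2).choose 2 * ((t + 2) ^ 3 * (t + (i + 1 + 2))) ^ (i + 1)) := by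
            gcongr
            omega
      _ = _ := by ring

lemma two_mul_sum_le_of_geometric {M : ℕ} (x : ℕ → ℕ) (c : ℕ)
    (hx : ∀ i < c, 3 ^ (i + 1) * x i ≤ M) : 2 * ∑ i ∈ range c, x i ≤ M := by
  have key : 3 ^ c * (2 * ∑ i ∈ range c, x i) + M ≤ 3 ^ c * M := by
    induction c with
    | zero => simp
    | succ c ih =>
      have h1 := ih fun i hi => hx i (by omega)
      have h2 := hx c (by omega)
      rw [sum_range_succ, pow_succ] at *
      nlinarith
  exact Nat.le_of_mul_le_mul_left (by omega : 3 ^ c * (2 * ∑ i ∈ range c, x i) ≤ 3 ^ c * M)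
    (by positivity)

/-- The total contribution of the discarded kernel members. -/
lemma two_mul_sum_kernelWeight_le {t k c m : ℕ} (ht : 1 ≤ t) (hkc : k = t + (c + 1))
    (hm : 3 * (t + 2) ^ 3 * k * c + c ≤ m) :
    2 * ∑ i ∈ range c, kernelWeight t (i + 2) * smallCount m (k - t - (i + 1))
      ≤ (t + 2).choose 2 * smallCount m (c + 1) := by
  refine two_mul_sum_le_of_geometric _ c fun i hi => ?_
  rw [show k - t - (i + 1) = c - i by omega]
  calc 3 ^ (i + 1) * (kernelWeight t (i + 2) * smallCount m (c - i))
      ≤ 3 ^ (i + 1) * ((t + 2).choose 2 * ((t + 2) ^ 3 * k) ^ (i + 1) * smallCount m (c - i)) := by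
        gcongr
        refine (kernelWeight_le ht i).trans ?_
        gcongr
        omega
    _ = (t + 2).choose 2 * ((3 * (t + 2) ^ 3 * k) ^ (i + 1) * smallCount m (c - i)) := by
        rw [mul_assoc 3, mul_pow 3]
        ring
    _ ≤ _ := Nat.mul_le_mul_left _ (pow_mul_smallCount_le hm i hi)

theorem stmt5 (n k t : ℕ) (ht : 1 ≤ t) (hk : t < k) (hn : 3 * (t + 2) ^ 3 * k ^ 2 ≤ n)
    (F : Finset (Finset ℕ)) (hF : F ⊆ ksets n k) (hint : tIntersecting t F) :
    (dInt F F).card ≤ (dInt (Ankt n k t) (Ankt n k t)).card := by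
  obtain ⟨c, hc⟩ : ∃ c, k = t + (c + 1) := ⟨k - t - 1, by omega⟩
  have hcube : 27 ≤ (t + 2) ^ 3 := Nat.pow_le_pow_left (by omega : 3 ≤ t + 2) 3
  have hn' : 3 * (t + 2) ^ 3 * k * c + c + 3 * k + (t + 2) ≤ n := by
    refine le_trans ?_ hn
    have h1 : 81 * k ≤ 3 * (t + 2) ^ 3 * k := Nat.mul_le_mul_right k (by omega)
    have h2 : 3 * (t + 2) ^ 3 * k ^ 2
        = 3 * (t + 2) ^ 3 * k * c + 3 * (t + 2) ^ 3 * k * (t + 1) := by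
      rw [hc]
      ring
    have h3 := Nat.mul_le_mul h1 (by omega : 1 ≤ t + 1)
    omega
  set m := n - (t + 2) with hmdef
  have hm : 3 * (t + 2) ^ 3 * k * c + c ≤ m := by omega
  have hground : ground (t + 2) ⊆ ground n := by
    intro a ha
    simp only [ground, mem_Icc] at ha ⊢
    omega
  have htarget := card_le_card (traceFamily_subset_dInt_Ankt (n := n) (k := k) (t := t) (by omega))
  by_cases hex : ∃ Y ⊆ ground n, Y.card = t + 2 ∧ ∀ P ∈ F, t + 1 ≤ (P ∩ Y).card
  · obtain ⟨Y, hY, hYc, hFY⟩ := hex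
    refine le_trans (card_le_card (dInt_subset_traceFamily hYc hF hFY)) (le_trans (le_of_eq ?_)
      htarget)
    rw [card_traceFamily hY hYc, card_traceFamily hground (card_ground _)]
  rw [card_traceFamily hground (card_ground _), ← hmdef] at htarget
  have hkernel : IsKernel n t (t + (c + 1)) F F :=
    ⟨fun w hw => (mem_powersetCard.1 (hF hw)).1,
      fun w hw => ((mem_powersetCard.1 (hF hw)).2.trans hc).le, hint,
      fun P hP => ⟨P, hP, subset_rfl⟩⟩
  obtain ⟨G, hGF, T, hT, hle⟩ := hkernel.exists_reduced c hF hc.ge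
  have hG : (dInt G G).card ≤ smallCount m (k - t)
      + ((t + 2).choose 2 - 1) * ((k + 1) * smallCount m (k - (t + 1)))
      + (t + 2) * smallCount m (k - (t + 1)) + smallCount m (k - (t + 2)) := by
    rcases exists_common_or_superset (by omega) hT.subset_ground hT.card_le hT.inter with
      ⟨C, hC, hCc, hTC⟩ | ⟨Y, hY, hYc, hTY⟩
    · refine (card_dInt_le_of_common (by omega) hC hCc (hGF.trans hF) fun P hP => ?_).trans ?_
      · obtain ⟨w, hw, hwP⟩ := hT.cover P hP
        exact (hTC w hw).trans hwP
      · rw [← hmdef]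
        omega
    · push Not at hex
      obtain ⟨P₀, hP₀, hlt⟩ := hex Y hY hYc
      refine card_dInt_le_of_exceptional ht hY hYc (hGF.trans hF) (fun P hP => ?_)
        (mem_powersetCard.1 (hF hP₀)).2 (by omega) fun P hP => hint P (hGF hP) P₀ hP₀
      obtain ⟨w, hw, hwP⟩ := hT.cover P hP
      exact (hTY w hw).trans (card_le_card (inter_subset_inter_right hwP))
  have hsum := two_mul_sum_kernelWeight_le ht hc hm
  rw [← hmdef] at hle
  refine le_trans ?_ htarget
  have hratio := mul_smallCount_le hm le_rfl
  have hQ : 3 ≤ (t + 2).choose 2 := Nat.choose_le_choose 2 (by omega : 3 ≤ t + 2)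
  rw [show k - t = c + 1 by omega, show k - (t + 1) = c by omega] at *
  have hsmall : 40 * ((k + 1) * smallCount m c) ≤ smallCount m (c + 1) := by
    refine le_trans ?_ hratio
    rw [← mul_assoc]
    refine Nat.mul_le_mul_right _ ?_
    have : 81 * k ≤ 3 * (t + 2) ^ 3 * k := Nat.mul_le_mul_right k (by omega)
    omega
  have hmul := Nat.mul_le_mul (Nat.sub_le ((t + 2).choose 2) 1) hsmall
  have hmul3 := Nat.mul_le_mul_right (smallCount m (c + 1)) hQ
  nlinarith
end

section
/- Let F, G ⊆ binom([n],k) be cross-intersecting families and set H = I(F, G) ∩ binom([n], k-1), i.e. the family of (k-1)-element sets of the form F ∩ G with F ∈ F, G ∈ G, F ≠ G. Then ν(H) ≤ 4; that is, H contains no 5 pairwise disjoint members. -/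
open Finset

/-- Three pairwise disjoint index classes in `Fin 5`, one of size at most one, cover at most
twice as many ordered pairs as there are indices in the first two; equality forces `4 ∣ a + b`. -/
lemma cover_bound {a b m : ℕ} (hm : m ≤ 1) (h : a + b + m ≤ 5) :
    a * b + a * m + m * b ≤ 2 * (a + b) ∧
      (a * b + a * m + m * b = 2 * (a + b) → 4 ∣ a + b) := by
  have ha : a ≤ 5 := by omega
  have hb : b ≤ 5 := by omega
  interval_cases m <;> interval_cases a <;> interval_cases b <;> omega

/-- Five pairwise disjoint sets `H i` cannot be extended by single points `x i ≠ y i` outside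
`H i` in such a way that `H i ∪ {x i}` meets `H j ∪ {y j}` for all `i ≠ j`. -/
lemma no_five_extensions {α : Type*} [DecidableEq α] (H : Fin 5 → Finset α) (x y : Fin 5 → α)
    (hH : ∀ i j, i ≠ j → Disjoint (H i) (H j))
    (hx : ∀ i, x i ∉ H i) (hy : ∀ i, y i ∉ H i) (hxy : ∀ i, x i ≠ y i)
    (hcov : ∀ i j, i ≠ j → x i ∈ H j ∨ y j ∈ H i ∨ x i = y j) : False := by
  set A : α → Finset (Fin 5) := fun v => univ.filter fun i => x i = v with hA
  set B : α → Finset (Fin 5) := fun v => univ.filter fun i => y i = v with hB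
  set M : α → Finset (Fin 5) := fun v => univ.filter fun i => v ∈ H i with hM
  set V : Finset α := univ.image x ∪ univ.image y with hV
  have hM1 (v : α) : #(M v) ≤ 1 := by
    rw [card_le_one]
    intro i hi j hj
    simp only [hM, mem_filter, mem_univ, true_and] at hi hj
    by_contra hij
    exact disjoint_left.mp (hH i j hij) hi hj
  have hsum (v : α) : #(A v) + #(B v) + #(M v) ≤ 5 := by
    have hAB : Disjoint (A v) (B v) := by
      simp only [disjoint_left, hA, hB, mem_filter, mem_univ, true_and]
      intro i hi hi'
      exact hxy i (hi.trans hi'.symm)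
    have hABM : Disjoint (A v ∪ B v) (M v) := by
      simp only [disjoint_left, hA, hB, hM, mem_union, mem_filter, mem_univ, true_and]
      rintro i (rfl | rfl)
      exacts [hx i, hy i]
    rw [← card_union_of_disjoint hAB, ← card_union_of_disjoint hABM]
    exact card_le_univ _
  have hbound (v : α) := cover_bound (hM1 v) (hsum v)
  have hA5 : ∑ v ∈ V, #(A v) = 5 := by
    rw [← card_eq_sum_card_fiberwise (f := x) (s := univ) (t := V)]
    · simp
    · intro i _
      simp [hV]
  have hB5 : ∑ v ∈ V, #(B v) = 5 := by
    rw [← card_eq_sum_card_fiberwise (f := y) (s := univ) (t := V)]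
    · simp
    · intro i _
      simp [hV]
  have hpairs : (univ : Finset (Fin 5)).offDiag ⊆
      V.biUnion fun v => A v ×ˢ B v ∪ A v ×ˢ M v ∪ M v ×ˢ B v := by
    rintro ⟨i, j⟩ hij
    simp only [mem_offDiag, mem_univ, true_and] at hij
    simp only [mem_biUnion, mem_union, mem_product, hA, hB, hM, hV, mem_filter, mem_image,
      mem_univ, true_and]
    rcases hcov i j hij with h | h | h
    · exact ⟨x i, .inl ⟨i, rfl⟩, .inl (.inr ⟨rfl, h⟩)⟩
    · exact ⟨y j, .inr ⟨j, rfl⟩, .inr ⟨h, rfl⟩⟩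
    · exact ⟨x i, .inl ⟨i, rfl⟩, .inl (.inl ⟨rfl, h.symm⟩)⟩
  have hlower : 20 ≤ ∑ v ∈ V, (#(A v) * #(B v) + #(A v) * #(M v) + #(M v) * #(B v)) := by
    calc 20 = #(univ : Finset (Fin 5)).offDiag := by simp [offDiag_card]
      _ ≤ _ := card_le_card hpairs
      _ ≤ _ := card_biUnion_le
      _ ≤ _ := by
        refine sum_le_sum fun v _ => ?_
        simp only [← card_product]
        exact (card_union_le _ _).trans (Nat.add_le_add_right (card_union_le _ _) _)
  have htotal : ∑ v ∈ V, (#(A v) + #(B v)) = 10 := by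
    rw [sum_add_distrib, hA5, hB5]
  have hupper : ∑ v ∈ V, 2 * (#(A v) + #(B v)) = 20 := by
    simp [← mul_sum, htotal]
  have heq := (sum_eq_sum_iff_of_le fun v (_ : v ∈ V) => (hbound v).1).mp
    (le_antisymm (sum_le_sum fun v _ => (hbound v).1) (hupper.trans_le hlower))
  have hdvd : 4 ∣ ∑ v ∈ V, (#(A v) + #(B v)) := dvd_sum fun v hv => (hbound v).2 (heq v hv)
  omega

/-- Two distinct `k`-sets meeting in `k - 1` points are one-point extensions of their
intersection. -/
lemma exists_insert_inter {α : Type*} [DecidableEq α] {k : ℕ} {S T : Finset α}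
    (hS : #S = k) (hT : #T = k) (hk : k ≠ 0) (hI : #(S ∩ T) = k - 1) :
    ∃ x y, x ∉ S ∩ T ∧ y ∉ S ∩ T ∧ x ≠ y ∧
      S = insert x (S ∩ T) ∧ T = insert y (S ∩ T) := by
  obtain ⟨x, hx, hxS⟩ := (covBy_iff_card_sdiff_eq_one.mpr
    ⟨inter_subset_left, by grind [card_sdiff_of_subset]⟩ : S ∩ T ⋖ S).exists_finset_insert
  obtain ⟨y, hy, hyT⟩ := (covBy_iff_card_sdiff_eq_one.mpr
    ⟨inter_subset_right, by grind [card_sdiff_of_subset]⟩ : S ∩ T ⋖ T).exists_finset_insert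
  refine ⟨x, y, hx, hy, ?_, hxS.symm, hyT.symm⟩
  rintro rfl
  have hxS' : x ∈ S := hxS ▸ mem_insert_self _ _
  have hxT' : x ∈ T := hyT ▸ mem_insert_self _ _
  exact hx (mem_inter.mpr ⟨hxS', hxT'⟩)

theorem stmt8 (n k : ℕ)
    (F G : Finset (Finset ℕ)) (hF : F ⊆ ksets n k) (hG : G ⊆ ksets n k)
    (hcross : crossInt F G) :
    nu (dInt F G ∩ ksets n (k - 1)) ≤ 4 := by
  classical
  rw [nu, Finset.sup_le_iff]
  intro N hN
  rw [mem_filter, mem_powerset] at hN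
  obtain ⟨hN, hdisj⟩ := hN
  by_contra! hcard
  obtain ⟨N', hN', hcard'⟩ := exists_subset_card_eq (Nat.succ_le_of_lt hcard)
  let e := N'.equivFinOfCardEq hcard'
  let H : Fin 5 → Finset ℕ := fun i => (e.symm i : Finset ℕ)
  have hHN (i : Fin 5) : H i ∈ N := hN' (e.symm i).2
  have hH (i j : Fin 5) (hij : i ≠ j) : Disjoint (H i) (H j) :=
    hdisj (hHN i) (hHN j) fun h => hij (e.symm.injective (Subtype.ext h))
  have hext (i : Fin 5) : ∃ x y, x ∉ H i ∧ y ∉ H i ∧ x ≠ y ∧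
      insert x (H i) ∈ F ∧ insert y (H i) ∈ G := by
    obtain ⟨hI, hc⟩ := mem_inter.mp (hN (hHN i))
    obtain ⟨⟨S, T⟩, hST, hSTH⟩ := mem_image.mp hI
    obtain ⟨hST, -⟩ := mem_filter.mp hST
    obtain ⟨hS, hT⟩ := mem_product.mp hST
    dsimp only at hSTH hS hT
    have hSk : #S = k := (mem_powersetCard.mp (hF hS)).2
    have hTk : #T = k := (mem_powersetCard.mp (hG hT)).2
    have hk : k ≠ 0 := by
      rw [← hSk, card_ne_zero]
      exact (hcross S hS T hT).mono inter_subset_left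
    have hc : #(S ∩ T) = k - 1 := hSTH ▸ (mem_powersetCard.mp hc).2
    obtain ⟨x, y, hx, hy, hxy, hxS, hyT⟩ := exists_insert_inter hSk hTk hk hc
    rw [hSTH] at hx hy hxS hyT
    exact ⟨x, y, hx, hy, hxy, hxS ▸ hS, hyT ▸ hT⟩
  choose x y hx hy hxy hxF hyG using hext
  refine no_five_extensions H x y hH hx hy hxy fun i j hij => ?_
  obtain ⟨v, hv⟩ := hcross _ (hxF i) _ (hyG j)
  have hvij : v ∈ H i → v ∉ H j := fun h => disjoint_left.mp (hH i j hij) h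
  grind
end

section
/- Suppose n ≥ 2k and F, G ⊆ binom([n],k) are nonempty saturated cross-intersecting families. Let B(F) be the family of minimal (under inclusion) members of T(G) and B(G) the family of minimal members of T(F). Then: (i) B(F) and B(G) are antichains, and B(F), B(G) are cross-intersecting; (ii) F = {F ∈ binom([n],k) : ∃ B ∈ B(F), B ⊆ F} and G = {G ∈ binom([n],k) : ∃ B ∈ B(G), B ⊆ G}. -/
open Finset

theorem crossInt.symm {A B : Finset (Finset ℕ)} (h : crossInt A B) : crossInt B A :=
  fun b hb a ha => inter_comm a b ▸ h a ha b hb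

theorem mem_ksets {n k : ℕ} {S : Finset ℕ} : S ∈ ksets n k ↔ S ⊆ ground n ∧ S.card = k :=
  mem_powersetCard

theorem mem_transv {n k : ℕ} {H : Finset (Finset ℕ)} {T : Finset ℕ} :
    T ∈ transv n k H ↔ T ⊆ ground n ∧ T.card ≤ k ∧ ∀ h ∈ H, (T ∩ h).Nonempty := by
  simp [transv]

theorem mem_transv_of_mem_basis {n k : ℕ} {H : Finset (Finset ℕ)} {b : Finset ℕ}
    (hb : b ∈ basis n k H) : b ∈ transv n k H :=
  (mem_filter.1 hb).1

theorem isAntichain_basis (n k : ℕ) (H : Finset (Finset ℕ)) :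
    IsAntichain (· ⊆ ·) ((basis n k H : Finset (Finset ℕ)) : Set (Finset ℕ)) :=
  fun _ ha _ hb hne hab =>
    hne ((mem_filter.1 hb).2 _ (mem_transv_of_mem_basis ha) hab)

theorem exists_mem_basis_subset {n k : ℕ} {H : Finset (Finset ℕ)} {T : Finset ℕ}
    (hT : T ∈ transv n k H) : ∃ b ∈ basis n k H, b ⊆ T := by
  obtain ⟨b, hbT, hb⟩ := exists_le_minimal _ hT
  exact ⟨b, mem_filter.2 ⟨hb.prop, fun _ hc hcb => hb.eq_of_le hc hcb⟩, hbT⟩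

/-- A family of `k`-sets that contains every `k`-set meeting all members of `G` is generated by
the minimal transversals of `G`. -/
theorem eq_filter_basis {n k : ℕ} {F G : Finset (Finset ℕ)} (hF : F ⊆ ksets n k)
    (hcross : crossInt F G)
    (hmax : ∀ S ∈ ksets n k, (∀ g ∈ G, (S ∩ g).Nonempty) → S ∈ F) :
    F = (ksets n k).filter fun S => ∃ b ∈ basis n k G, b ⊆ S := by
  ext S
  rw [mem_filter]
  refine ⟨fun hS => ⟨hF hS, exists_mem_basis_subset ?_⟩, ?_⟩
  · obtain ⟨hSn, hSk⟩ := mem_ksets.1 (hF hS)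
    exact mem_transv.2 ⟨hSn, hSk.le, hcross S hS⟩
  · rintro ⟨hS, b, hb, hbS⟩
    have hbG := (mem_transv.1 (mem_transv_of_mem_basis hb)).2.2
    exact hmax S hS fun g hg => (hbG g hg).mono (inter_subset_inter_right hbS)

theorem crossInt_transv {n k : ℕ} (hn : 2 * k ≤ n) {F G : Finset (Finset ℕ)}
    (hmax : ∀ S ∈ ksets n k, (∀ g ∈ G, (S ∩ g).Nonempty) → S ∈ F) :
    crossInt (transv n k G) (transv n k F) := by
  intro b hb c hc
  obtain ⟨hbn, hbk, hbG⟩ := mem_transv.1 hb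
  obtain ⟨hcn, hck, hcF⟩ := mem_transv.1 hc
  by_contra hbc
  have hdisj : Disjoint b c := by
    rwa [disjoint_iff_inter_eq_empty, ← not_nonempty_iff_eq_empty]
  have hcard : k ≤ (ground n \ c).card := by
    rw [card_sdiff_of_subset hcn, ground, Nat.card_Icc]
    omega
  obtain ⟨S, hbS, hSc, hSk⟩ :=
    exists_subsuperset_card_eq (subset_sdiff.2 ⟨hbn, hdisj⟩) hbk hcard
  obtain ⟨hSn, hSdisj⟩ := subset_sdiff.1 hSc
  have hSF : S ∈ F := hmax S (mem_ksets.2 ⟨hSn, hSk⟩) fun g hg =>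
    (hbG g hg).mono (inter_subset_inter_right hbS)
  exact not_disjoint_iff_nonempty_inter.2 (hcF S hSF) hSdisj.symm

theorem stmt10 (n k : ℕ) (hn : 2 * k ≤ n)
    (F G : Finset (Finset ℕ)) (hF : F ⊆ ksets n k) (hG : G ⊆ ksets n k)
    (hFne : F.Nonempty) (hGne : G.Nonempty) (hcross : crossInt F G)
    (hsat : ∀ F' G' : Finset (Finset ℕ), F ⊆ F' → G ⊆ G' →
      F' ⊆ ksets n k → G' ⊆ ksets n k → crossInt F' G' → F' = F ∧ G' = G) :
    (IsAntichain (· ⊆ ·) ((basis n k G : Finset (Finset ℕ)) : Set (Finset ℕ)) ∧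
     IsAntichain (· ⊆ ·) ((basis n k F : Finset (Finset ℕ)) : Set (Finset ℕ)) ∧
     crossInt (basis n k G) (basis n k F)) ∧
    (F = (ksets n k).filter fun S => ∃ b ∈ basis n k G, b ⊆ S) ∧
    (G = (ksets n k).filter fun S => ∃ b ∈ basis n k F, b ⊆ S) := by
  have hmaxF : ∀ S ∈ ksets n k, (∀ g ∈ G, (S ∩ g).Nonempty) → S ∈ F := fun S hS hSG =>
    insert_eq_self.1 (hsat (insert S F) G (subset_insert S F) Subset.rfl
      (insert_subset hS hF) hG ((forall_mem_insert _ _ _).2 ⟨hSG, hcross⟩)).1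
  have hmaxG : ∀ S ∈ ksets n k, (∀ f ∈ F, (S ∩ f).Nonempty) → S ∈ G := fun S hS hSF =>
    insert_eq_self.1 (hsat F (insert S G) Subset.rfl (subset_insert S G) hF
      (insert_subset hS hG)
      (crossInt.symm ((forall_mem_insert _ _ _).2 ⟨hSF, hcross.symm⟩))).2
  exact ⟨⟨isAntichain_basis n k G, isAntichain_basis n k F, fun b hb c hc =>
      crossInt_transv hn hmaxF b (mem_transv_of_mem_basis hb) c (mem_transv_of_mem_basis hc)⟩,
    eq_filter_basis hF hcross hmaxF, eq_filter_basis hG hcross.symm hmaxG⟩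
end

section
/- Suppose t ≥ 1, k > t, n ≥ 2k, and F ⊆ binom([n],k) is a nonempty saturated t-intersecting family. Let B be the family of minimal (under inclusion) members of T_t(F). Then: (i) B is a t-intersecting antichain; (ii) F = {H ∈ binom([n],k) : ∃ B ∈ B, B ⊆ H}. -/
open Finset

theorem mem_ttransv {n k t : ℕ} {H : Finset (Finset ℕ)} {T : Finset ℕ} :
    T ∈ ttransv n k t H ↔ T ⊆ ground n ∧ T.card ≤ k ∧ ∀ h ∈ H, t ≤ (T ∩ h).card := by
  simp [ttransv]

/-- A `k`-set containing a `t`-transversal of a saturated `t`-intersecting family belongs to it. -/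
theorem mem_of_ttransv_subset {n k t : ℕ} (hk : t ≤ k) {F : Finset (Finset ℕ)}
    (hF : F ⊆ ksets n k) (hint : tIntersecting t F)
    (hsat : ∀ F' : Finset (Finset ℕ), F ⊆ F' → F' ⊆ ksets n k →
      tIntersecting t F' → F' = F)
    {T H : Finset ℕ} (hT : T ∈ ttransv n k t F) (hH : H ∈ ksets n k) (hTH : T ⊆ H) :
    H ∈ F := by
  have hHF : ∀ G ∈ F, t ≤ (H ∩ G).card := fun G hG =>
    ((mem_ttransv.1 hT).2.2 G hG).trans (card_le_card (inter_subset_inter_right hTH))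
  have hins : insert H F = F := by
    refine hsat _ (subset_insert _ _) (insert_subset hH hF) fun A hA B hB => ?_
    rcases mem_insert.1 hA with rfl | hAF <;> rcases mem_insert.1 hB with rfl | hBF
    · rwa [inter_self, (mem_ksets.1 hH).2]
    · exact hHF B hBF
    · rw [inter_comm]
      exact hHF A hAF
    · exact hint A hAF B hBF
  exact hins ▸ mem_insert_self H F

/-- The `t`-transversals of a saturated `t`-intersecting family are `t`-intersecting. -/
theorem tIntersecting_ttransv {n k t : ℕ} (hk : t ≤ k) (hn : 2 * k ≤ n)
    {F : Finset (Finset ℕ)} (hF : F ⊆ ksets n k) (hint : tIntersecting t F)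
    (hsat : ∀ F' : Finset (Finset ℕ), F ⊆ F' → F' ⊆ ksets n k →
      tIntersecting t F' → F' = F) :
    tIntersecting t (ttransv n k t F) := by
  intro T hT T' hT'
  obtain ⟨hTn, hTk, -⟩ := mem_ttransv.1 hT
  obtain ⟨-, hTk', hTF'⟩ := mem_ttransv.1 hT'
  have hsub : T ⊆ ground n \ (T' \ T) :=
    subset_sdiff.2 ⟨hTn, disjoint_sdiff⟩
  have hcard : k ≤ (ground n \ (T' \ T)).card := by
    have h₁ := le_card_sdiff (T' \ T) (ground n)
    have h₂ : (T' \ T).card ≤ T'.card := card_le_card sdiff_subset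
    have h₃ : (ground n).card = n := by simp [ground]
    omega
  obtain ⟨H, hTH, hHn, hHk⟩ := exists_subsuperset_card_eq hsub hTk hcard
  have hHF : H ∈ F := mem_of_ttransv_subset hk hF hint hsat hT
    (mem_ksets.2 ⟨hHn.trans sdiff_subset, hHk⟩) hTH
  refine (hTF' H hHF).trans (card_le_card fun x hx => ?_)
  obtain ⟨hxT', hxH⟩ := mem_inter.1 hx
  have := hHn hxH
  simp only [mem_sdiff, mem_inter] at this ⊢
  tauto

/-- Every `t`-transversal contains a minimal one. -/
theorem exists_tbasis_subset {n k t : ℕ} {F : Finset (Finset ℕ)} {T : Finset ℕ}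
    (hT : T ∈ ttransv n k t F) : ∃ b ∈ tbasis n k t F, b ⊆ T := by
  obtain ⟨b, hbT, hb⟩ := (ttransv n k t F).exists_le_minimal hT
  exact ⟨b, mem_filter.2 ⟨hb.prop, fun b' hb' h => hb.eq_of_le hb' h⟩, hbT⟩

theorem stmt14 (n k t : ℕ) (ht : 1 ≤ t) (hk : t < k) (hn : 2 * k ≤ n)
    (F : Finset (Finset ℕ)) (hF : F ⊆ ksets n k) (hFne : F.Nonempty)
    (hint : tIntersecting t F)
    (hsat : ∀ F' : Finset (Finset ℕ), F ⊆ F' → F' ⊆ ksets n k →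
      tIntersecting t F' → F' = F) :
    (tIntersecting t (tbasis n k t F) ∧
      IsAntichain (· ⊆ ·) ((tbasis n k t F : Finset (Finset ℕ)) : Set (Finset ℕ))) ∧
    F = (ksets n k).filter fun H => ∃ b ∈ tbasis n k t F, b ⊆ H := by
  have hmem : ∀ b ∈ tbasis n k t F, b ∈ ttransv n k t F := fun b hb => (mem_filter.1 hb).1
  refine ⟨⟨fun b hb b' hb' => ?_, fun b hb b' hb' hne hsub => ?_⟩, ?_⟩
  · exact tIntersecting_ttransv hk.le hn hF hint hsat b (hmem b hb) b' (hmem b' hb')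
  · exact hne ((mem_filter.1 (mem_coe.1 hb')).2 b (hmem b hb) hsub)
  · ext H
    refine ⟨fun hH => mem_filter.2 ⟨hF hH, exists_tbasis_subset ?_⟩, fun hH => ?_⟩
    · obtain ⟨hHn, hHk⟩ := mem_ksets.1 (hF hH)
      exact mem_ttransv.2 ⟨hHn, hHk.le, hint H hH⟩
    · obtain ⟨hHk, b, hb, hbH⟩ := mem_filter.1 hH
      exact mem_of_ttransv_subset hk.le hF hint hsat (hmem b hb) hHk hbH
end

section
/- Suppose n ≥ 1 and A ⊆ 2^{[n]} is an antichain. Then |I(A)| < 2^n − (√2)^n, where the inequality is between real numbers. -/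
open Finset

/-- No member of an antichain is contained in an intersection of two distinct members. -/
lemma not_subset_of_mem_dInt {A : Finset (Finset ℕ)}
    (hanti : IsAntichain (· ⊆ ·) (A : Set (Finset ℕ))) {P X : Finset ℕ} (hP : P ∈ A)
    (hX : X ∈ dInt A A) : ¬ P ⊆ X := by
  simp only [dInt, mem_image, mem_filter, mem_product, Prod.exists] at hX
  obtain ⟨C, D, ⟨⟨hC, hD⟩, hne⟩, rfl⟩ := hX
  intro h
  exact hne ((hanti.eq hP hC (h.trans inter_subset_left)).symm.trans
    (hanti.eq hP hD (h.trans inter_subset_right)))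

/-- Every subset `S` of the ground set `G` is a symmetric difference of two subsets of `G` that are
not intersections of two distinct members of the antichain `A`. -/
lemma exists_notMem_dInt_symmDiff_notMem_dInt {A : Finset (Finset ℕ)} {G S : Finset ℕ}
    (hA : A ⊆ G.powerset) (hanti : IsAntichain (· ⊆ ·) (A : Set (Finset ℕ))) (hS : S ⊆ G) :
    ∃ X ⊆ G, X ∉ dInt A A ∧ symmDiff X S ∉ dInt A A := by
  by_cases hF : G \ S ∈ dInt A A
  · have hF' := hF
    simp only [dInt, mem_image, mem_filter, mem_product, Prod.exists] at hF'
    obtain ⟨P, Q, ⟨⟨hP, hQ⟩, -⟩, hPQ⟩ := hF'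
    refine ⟨P, mem_powerset.1 (hA hP), fun h => not_subset_of_mem_dInt hanti hP h subset_rfl,
      fun h => not_subset_of_mem_dInt hanti hQ h fun x hx => ?_⟩
    have hxG := mem_powerset.1 (hA hQ) hx
    have hxPQ := Finset.ext_iff.1 hPQ x
    simp only [mem_inter, mem_sdiff, mem_symmDiff] at hxPQ ⊢
    tauto
  · refine ⟨G, subset_rfl, fun h => ?_, ?_⟩
    · have h' := h
      simp only [dInt, mem_image, mem_filter, mem_product, Prod.exists] at h'
      obtain ⟨P, Q, ⟨⟨hP, -⟩, -⟩, -⟩ := h'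
      exact not_subset_of_mem_dInt hanti hP h (mem_powerset.1 (hA hP))
    · rwa [symmDiff_of_ge hS]

lemma dInt_subset_powerset {A : Finset (Finset ℕ)} {G : Finset ℕ} (hA : A ⊆ G.powerset) :
    dInt A A ⊆ G.powerset := by
  intro X hX
  simp only [dInt, mem_image, mem_filter, mem_product, Prod.exists] at hX
  obtain ⟨P, Q, ⟨⟨hP, -⟩, -⟩, rfl⟩ := hX
  exact mem_powerset.2 (inter_subset_left.trans (mem_powerset.1 (hA hP)))

/-- The subsets of a nonempty `G` that are not intersections of two distinct members of the
antichain `A` number more than the square root of `2 ^ #G`. -/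
lemma two_pow_card_lt_sq_card_powerset_sdiff_dInt {A : Finset (Finset ℕ)} {G : Finset ℕ}
    (hG : G.Nonempty) (hA : A ⊆ G.powerset)
    (hanti : IsAntichain (· ⊆ ·) (A : Set (Finset ℕ))) :
    2 ^ #G < #(G.powerset \ dInt A A) ^ 2 := by
  set N := G.powerset \ dInt A A with hN
  have hsub : G.powerset.erase ∅ ⊆ N.offDiag.image fun p => symmDiff p.1 p.2 := by
    intro S hS
    obtain ⟨hS0, hSG⟩ := mem_erase.1 hS
    rw [mem_powerset] at hSG
    obtain ⟨X, hXG, hX, hXS⟩ := exists_notMem_dInt_symmDiff_notMem_dInt hA hanti hSG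
    refine mem_image.2 ⟨(X, symmDiff X S), mem_offDiag.2 ⟨?_, ?_, fun h => hS0 ?_⟩, ?_⟩
    · exact mem_sdiff.2 ⟨mem_powerset.2 hXG, hX⟩
    · exact mem_sdiff.2 ⟨mem_powerset.2 (symmDiff_le_sup.trans (union_subset hXG hSG)), hXS⟩
    · simpa using h.symm
    · exact symmDiff_symmDiff_cancel_left X S
  have hcard := (card_le_card hsub).trans card_image_le
  rw [card_erase_of_mem (empty_mem_powerset G), card_powerset, offDiag_card] at hcard
  have htwo : 2 ≤ 2 ^ #G := Nat.le_self_pow hG.card_pos.ne' 2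
  have hsq : #N ≤ #N * #N := Nat.le_mul_self _
  have hN2 : 2 ≤ #N := by
    by_contra! h
    interval_cases #N <;> omega
  rw [sq]
  omega

theorem stmt17 (n : ℕ) (hn : 1 ≤ n)
    (A : Finset (Finset ℕ)) (hA : A ⊆ (ground n).powerset)
    (hanti : IsAntichain (· ⊆ ·) ((A : Finset (Finset ℕ)) : Set (Finset ℕ))) :
    ((dInt A A).card : ℝ) < 2 ^ n - Real.sqrt 2 ^ n := by
  have hcardG : #(ground n) = n := by simp [ground]
  have hlt := two_pow_card_lt_sq_card_powerset_sdiff_dInt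
    (card_pos.1 (by omega : 0 < #(ground n))) hA hanti
  have hadd := card_sdiff_add_card_eq_card (dInt_subset_powerset hA)
  rw [card_powerset] at hadd
  rw [hcardG] at hlt hadd
  have hlt' : (2 : ℝ) ^ n < (#((ground n).powerset \ dInt A A) : ℝ) ^ 2 := mod_cast hlt
  have hadd' : (#((ground n).powerset \ dInt A A) : ℝ) + #(dInt A A) = 2 ^ n := mod_cast hadd
  have hroot : Real.sqrt 2 ^ n < #((ground n).powerset \ dInt A A) := by
    refine lt_of_pow_lt_pow_left₀ 2 (Nat.cast_nonneg _) ?_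
    rwa [← pow_mul, mul_comm, pow_mul, Real.sq_sqrt zero_le_two]
  linarith
end

section
/- Suppose A, B ⊆ 2^{[n]} are nonempty cross-Sperner families. Then |I(A, B)| ≤ 2^n − |A| − |B| − 1. -/
open Finset

theorem disjoint_of_crossSperner {A B : Finset (Finset ℕ)} (h : crossSperner A B) :
    Disjoint A B :=
  Finset.disjoint_left.2 fun x hxA hxB => (h x hxA x hxB).1 subset_rfl

theorem disjoint_union_meet_of_crossSperner {A B : Finset (Finset ℕ)} (h : crossSperner A B) :
    Disjoint (A ∪ B) (meet A B) := by
  refine Finset.disjoint_right.2 fun x hx hxAB => ?_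
  obtain ⟨⟨a, b⟩, hab, rfl⟩ := Finset.mem_image.1 hx
  obtain ⟨ha, hb⟩ := Finset.mem_product.1 hab
  rcases Finset.mem_union.1 hxAB with hxA | hxB
  · exact (h _ hxA b hb).1 Finset.inter_subset_right
  · exact (h a ha _ hxB).2 Finset.inter_subset_left

/-- A common superset of the members of two nonempty cross-Sperner families is neither a member
of the families nor an intersection of members. -/
theorem notMem_union_meet_of_crossSperner {A B : Finset (Finset ℕ)} {S : Finset ℕ}
    (hA : A ⊆ S.powerset) (hB : B ⊆ S.powerset) (hAne : A.Nonempty) (hBne : B.Nonempty)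
    (h : crossSperner A B) : S ∉ A ∪ B ∪ meet A B := by
  obtain ⟨a₀, ha₀⟩ := hAne
  obtain ⟨b₀, hb₀⟩ := hBne
  intro hS
  rcases Finset.mem_union.1 hS with hS | hS
  · rcases Finset.mem_union.1 hS with hS | hS
    · exact (h _ hS b₀ hb₀).2 (Finset.mem_powerset.1 (hB hb₀))
    · exact (h a₀ ha₀ _ hS).1 (Finset.mem_powerset.1 (hA ha₀))
  · obtain ⟨⟨a, b⟩, hab, hEq⟩ := Finset.mem_image.1 hS
    obtain ⟨ha, hb⟩ := Finset.mem_product.1 hab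
    have hSb : S ⊆ b := hEq ▸ Finset.inter_subset_right
    exact (h a ha b hb).1 ((Finset.mem_powerset.1 (hA ha)).trans hSb)

theorem meet_subset_powerset {A B : Finset (Finset ℕ)} {S : Finset ℕ}
    (hA : A ⊆ S.powerset) : meet A B ⊆ S.powerset := by
  intro x hx
  obtain ⟨⟨a, b⟩, hab, rfl⟩ := Finset.mem_image.1 hx
  have ha := Finset.mem_powerset.1 (hA (Finset.mem_product.1 hab).1)
  exact Finset.mem_powerset.2 (Finset.inter_subset_left.trans ha)

theorem stmt18 (n : ℕ) (hn : 1 ≤ n)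
    (A B : Finset (Finset ℕ)) (hA : A ⊆ (ground n).powerset)
    (hB : B ⊆ (ground n).powerset)
    (hAne : A.Nonempty) (hBne : B.Nonempty) (hcs : crossSperner A B) :
    ((meet A B).card : ℤ) ≤ 2 ^ n - A.card - B.card - 1 := by
  have hsub : insert (ground n) (A ∪ B ∪ meet A B) ⊆ (ground n).powerset :=
    Finset.insert_subset (Finset.mem_powerset_self _)
      (Finset.union_subset (Finset.union_subset hA hB) (meet_subset_powerset hA))
  have hcard := Finset.card_le_card hsub
  rw [Finset.card_insert_of_notMem (notMem_union_meet_of_crossSperner hA hB hAne hBne hcs),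
    Finset.card_union_of_disjoint (disjoint_union_meet_of_crossSperner hcs),
    Finset.card_union_of_disjoint (disjoint_of_crossSperner hcs), Finset.card_powerset,
    ground, Nat.card_Icc, Nat.add_sub_cancel] at hcard
  zify at hcard
  linarith
end
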